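/- (Consistency of the Horvitz–Thompson variance estimator.) Fix K ≥ 2 and an arm k. Consider a sequence of experiments: X⁽ⁿ⁾ ∈ ℝ^{n×d_n} with unit-norm rows, potential outcomes with max_i |Y_i(k)| uniformly bounded, step sizes η_n > 0 with η_n ‖X⁽ⁿ⁾X⁽ⁿ⁾ᵀ − I_n‖_op → 0 and n² η_n² ‖X⁽ⁿ⁾X⁽ⁿ⁾ᵀ − I_n‖_op² → 0. Let Σ_η be the one-step PGD-Gauss solution, T ~ N(0, Σ_η), D_i = g(T_i), and define the variance estimator V̂_η = (K²/n) Σ_{i,j=1}^{n} Y_i(D_i) Y_j(D_j) f_k(Σ_{η,ij}) · 1{D_i = k, D_j = k} / P(D_i = k, D_j = k), where P(D_i = k, D_j = k) = f_k(Σ_{η,ij}) + 1/K². Then for all sufficiently large n all denominators are strictly positive (so V̂_η is well-defined), E[V̂_η] = V(Σ_η) := (K²/n) Y(k)ᵀ f_k(Σ_η) Y(k), and Var(V̂_η) → 0. -/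

import Mathlib

open MeasureTheory ProbabilityTheory Matrix Real Filter
open scoped BigOperators ENNReal NNReal Topology

noncomputable section

/-- The spectral (operator) norm of a square real matrix. -/
def opNorm {m : ℕ} (A : Matrix (Fin m) (Fin m) ℝ) : ℝ :=
  ‖(Matrix.toEuclideanCLM (𝕜 := ℝ) A : EuclideanSpace ℝ (Fin m) →L[ℝ] EuclideanSpace ℝ (Fin m))‖

/-- The standard normal CDF `Φ`. -/
def stdGaussianCDF (x : ℝ) : ℝ := (gaussianReal 0 1 (Set.Iic x)).toReal

/-- The set of values `t` mapped by the Gaussianization map `g` to arm `k`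
(arms are `0`-indexed: `k : Fin K` represents arm `k+1`; `q m = Φ⁻¹(m/K)`). -/
def armSet (q : ℕ → ℝ) (K : ℕ) (k : Fin K) : Set ℝ :=
  if k.val = 0 then Set.Iic (q 1)
  else if k.val = K - 1 then Set.Ioi (q (K - 1))
  else Set.Ioc (q k.val) (q (k.val + 1))

/-- The function `r_{i,j}(ρ)`. -/
def rfun (q : ℕ → ℝ) (i j : ℕ) (ρ : ℝ) : ℝ :=
  ∫ r in (0 : ℝ)..ρ,
    (2 * π * Real.sqrt (1 - r ^ 2))⁻¹ *
      Real.exp (-((q i ^ 2 + q j ^ 2 - 2 * r * q i * q j) / (2 * (1 - r ^ 2))))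

/-- The function `f_k` (arms `0`-indexed: `k : Fin K` represents arm `k+1`). -/
def fkfun (q : ℕ → ℝ) (K : ℕ) (k : Fin K) (ρ : ℝ) : ℝ :=
  if k.val = 0 then rfun q 1 1 ρ
  else if k.val = K - 1 then rfun q (K - 1) (K - 1) ρ
  else rfun q k.val k.val ρ + rfun q (k.val + 1) (k.val + 1) ρ
    - 2 * rfun q k.val (k.val + 1) ρ

/-- The one-step PGD-Gauss solution `Σ_η = D⁻¹ U² D⁻¹`, where
`U = I − η c (XXᵀ − I)` with `c = f_k′(0)` and `D` is the diagonal matrix whose `i`-th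
diagonal entry is the Euclidean norm of the `i`-th row of `U`. -/
def pgd {n d : ℕ} (X : Matrix (Fin n) (Fin d) ℝ) (η c : ℝ) : Matrix (Fin n) (Fin n) ℝ :=
  let U : Matrix (Fin n) (Fin n) ℝ := 1 - (η * c) • (X * Xᵀ - 1)
  Matrix.of fun i j =>
    (U * U) i j / (Real.sqrt (∑ l, U i l ^ 2) * Real.sqrt (∑ l, U j l ^ 2))

/-!
By Plackett's identity, the derivative in `ρ` of the bivariate normal distribution function with
correlation `ρ` is its density, so `r_{i,j}(ρ)` is the covariance of `{T₁ ≤ q_i}` and `{T₂ ≤ q_j}`,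
and `f_k(ρ)` is, by bilinearity, the covariance of the events that two units with correlation `ρ`
are assigned arm `k`. Each of these events has probability `1 / K`, so `V̂_η` is a Horvitz–Thompson
estimator with pair inclusion probabilities `f_k(Σ_ij) + 1 / K²`, and unbiasedness is immediate
once these are positive.

The rows of `U` have norm at least `1` and `U² = I + O(η ‖XXᵀ − I‖)`, so the off-diagonal entries
of `Σ_η` are uniformly `o(1 / n)`, hence so are the covariances of the assignment events. Split the
double sum `V̂_η` into its diagonal and the rest. The diagonal is `1 / n` times a sum of `n` bounded
variables with pairwise covariances `o(1 / n)`, which has vanishing variance; the remaining `n²`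
terms, each uniformly `o(1 / n)` and divided by `n`, are uniformly small.
-/

section EventCovariance

/-- The covariance of the indicators of the events `s` and `t`. -/
def eventCov {Ω : Type*} [MeasurableSpace Ω] (μ : Measure Ω) (s t : Set Ω) : ℝ :=
  μ.real (s ∩ t) - μ.real s * μ.real t

variable {Ω Ω' : Type*} [MeasurableSpace Ω] [MeasurableSpace Ω'] {μ : Measure Ω}
  {s s' t t' : Set Ω}

lemma measureReal_inter_eq_eventCov_add (μ : Measure Ω) (s t : Set Ω) :
    μ.real (s ∩ t) = eventCov μ s t + μ.real s * μ.real t := by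
  rw [eventCov, sub_add_cancel]

lemma eventCov_comm (μ : Measure Ω) (s t : Set Ω) : eventCov μ s t = eventCov μ t s := by
  rw [eventCov, eventCov, Set.inter_comm, mul_comm]

lemma eventCov_sdiff_left [IsFiniteMeasure μ] (hs : MeasurableSet s) (h : s ⊆ s') (t : Set Ω) :
    eventCov μ (s' \ s) t = eventCov μ s' t - eventCov μ s t := by
  have hinter : μ.real (s' \ s ∩ t) = μ.real (s' ∩ t) - μ.real (s ∩ t) := by
    rw [eq_sub_iff_add_eq, add_comm, ← measureReal_inter_add_sdiff (s := s' ∩ t) hs,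
      Set.inter_right_comm, Set.inter_eq_right.2 h, Set.inter_sdiff_right_comm]
  rw [eventCov, eventCov, eventCov, hinter, measureReal_sdiff h hs]
  ring

lemma eventCov_sdiff_sdiff [IsFiniteMeasure μ] (hs : MeasurableSet s) (hss : s ⊆ s')
    (ht : MeasurableSet t) (htt : t ⊆ t') :
    eventCov μ (s' \ s) (t' \ t) =
      eventCov μ s' t' - eventCov μ s' t - (eventCov μ s t' - eventCov μ s t) := by
  simp only [eventCov_sdiff_left hs hss, eventCov_comm _ _ (t' \ t), eventCov_sdiff_left ht htt,
    eventCov_comm _ t', eventCov_comm _ t]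

lemma eventCov_compl_compl [IsProbabilityMeasure μ] (hs : MeasurableSet s)
    (ht : MeasurableSet t) : eventCov μ sᶜ tᶜ = eventCov μ s t := by
  rw [Set.compl_eq_univ_sdiff, Set.compl_eq_univ_sdiff,
    eventCov_sdiff_sdiff hs (Set.subset_univ s) ht (Set.subset_univ t)]
  simp [eventCov]

lemma eventCov_map {f : Ω → Ω'} (hf : Measurable f) {s t : Set Ω'} (hs : MeasurableSet s)
    (ht : MeasurableSet t) : eventCov (μ.map f) s t = eventCov μ (f ⁻¹' s) (f ⁻¹' t) := by
  simp only [eventCov, map_measureReal_apply hf, hs, ht, hs.inter ht, Set.preimage_inter]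

lemma abs_eventCov_le_one [IsProbabilityMeasure μ] (s t : Set Ω) : |eventCov μ s t| ≤ 1 :=
  abs_sub_le_of_nonneg_of_le measureReal_nonneg measureReal_le_one
    (mul_nonneg measureReal_nonneg measureReal_nonneg)
    (mul_le_one₀ measureReal_le_one measureReal_nonneg measureReal_le_one)

lemma memLp_indicator_one [IsFiniteMeasure μ] (hs : MeasurableSet s) (p : ℝ≥0∞) :
    MemLp (s.indicator (1 : Ω → ℝ)) p μ :=
  (memLp_const (1 : ℝ)).indicator hs

lemma covariance_indicator_one [IsProbabilityMeasure μ] (hs : MeasurableSet s)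
    (ht : MeasurableSet t) :
    cov[s.indicator 1, t.indicator (1 : Ω → ℝ); μ] = eventCov μ s t := by
  rw [covariance_eq_sub (memLp_indicator_one hs 2) (memLp_indicator_one ht 2),
    ← Set.inter_indicator_one, integral_indicator_one hs, integral_indicator_one ht,
    integral_indicator_one (hs.inter ht), eventCov]

end EventCovariance

section Gaussian

local notation "φ" => gaussianPDFReal 0 1

variable {a b c r x ρ : ℝ}

lemma stdGaussianPDF_eq (x : ℝ) : φ x = (√(2 * π))⁻¹ * exp (-x ^ 2 / 2) := by
  simp [gaussianPDFReal]

lemma continuous_stdGaussianPDF : Continuous φ := by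
  simp only [funext stdGaussianPDF_eq]; fun_prop

lemma stdGaussianPDF_le_one (x : ℝ) : φ x ≤ 1 := by
  rw [stdGaussianPDF_eq]
  refine mul_le_one₀ (inv_le_one_of_one_le₀ ?_) (exp_nonneg _) (exp_le_one_iff.2 ?_)
  · exact one_le_sqrt.2 (by linarith [pi_gt_three])
  · linarith [sq_nonneg x]

lemma tendsto_stdGaussianPDF_atBot : Tendsto φ atBot (𝓝 0) := by
  have hsq : Tendsto (fun x : ℝ => x ^ 2 / 2) atBot atTop := by
    simpa only [sq, id] using (tendsto_id.atBot_mul_atBot₀ tendsto_id).atTop_div_const two_pos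
  simpa [Function.comp_def, funext stdGaussianPDF_eq, neg_div] using
    (tendsto_exp_neg_atTop_nhds_zero.comp hsq).const_mul (√(2 * π))⁻¹

lemma integrable_stdGaussianPDF_mul_abs : Integrable fun x => φ x * |x| := by
  refine ((integrable_mul_exp_neg_mul_sq one_half_pos).norm.const_mul (√(2 * π))⁻¹).congr
    (Eventually.of_forall fun x => ?_)
  simp only [norm_mul, norm_eq_abs, abs_exp, stdGaussianPDF_eq]
  ring_nf

lemma stdGaussianCDF_eq_integral (x : ℝ) : stdGaussianCDF x = ∫ t in Set.Iic x, φ t := by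
  rw [stdGaussianCDF, gaussianReal_apply_eq_integral 0 one_ne_zero, ENNReal.toReal_ofReal]
  exact setIntegral_nonneg measurableSet_Iic fun t _ => gaussianPDFReal_nonneg 0 1 t

lemma hasDerivAt_stdGaussianCDF (x : ℝ) : HasDerivAt stdGaussianCDF (φ x) x := by
  have hcdf : stdGaussianCDF = fun y => stdGaussianCDF 0 + ∫ t in (0 : ℝ)..y, φ t := by
    ext y
    rw [← intervalIntegral.integral_Iic_sub_Iic (integrable_gaussianPDFReal 0 1).integrableOn
      (integrable_gaussianPDFReal 0 1).integrableOn, ← stdGaussianCDF_eq_integral,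
      ← stdGaussianCDF_eq_integral, add_sub_cancel]
  rw [hcdf]
  exact (intervalIntegral.integral_hasDerivAt_right
    (continuous_stdGaussianPDF.intervalIntegrable _ _)
    (continuous_stdGaussianPDF.stronglyMeasurableAtFilter _ _)
    continuous_stdGaussianPDF.continuousAt).const_add _

lemma continuous_stdGaussianCDF : Continuous stdGaussianCDF :=
  continuous_iff_continuousAt.2 fun x => (hasDerivAt_stdGaussianCDF x).continuousAt

/-- The density at `(a, b)` of the centered Gaussian law on `ℝ²` with unit variances and
correlation `ρ`. -/
def stdBivariateGaussianPDF (ρ a b : ℝ) : ℝ :=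
  (2 * π * √(1 - ρ ^ 2))⁻¹ * exp (-((a ^ 2 + b ^ 2 - 2 * ρ * a * b) / (2 * (1 - ρ ^ 2))))

lemma stdBivariateGaussianPDF_comm (ρ a b : ℝ) :
    stdBivariateGaussianPDF ρ a b = stdBivariateGaussianPDF ρ b a := by
  unfold stdBivariateGaussianPDF
  ring_nf

lemma stdBivariateGaussianPDF_nonneg (ρ a b : ℝ) : 0 ≤ stdBivariateGaussianPDF ρ a b := by
  unfold stdBivariateGaussianPDF
  positivity

lemma one_sub_sq_pos (hρ : |ρ| < 1) : 0 < 1 - ρ ^ 2 :=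
  sub_pos.2 ((sq_lt_one_iff_abs_lt_one ρ).2 hρ)

lemma stdBivariateGaussianPDF_eq_mul (hρ : |ρ| < 1) (a b : ℝ) :
    stdBivariateGaussianPDF ρ a b = φ a * φ ((b - ρ * a) / √(1 - ρ ^ 2)) / √(1 - ρ ^ 2) := by
  have hpos := one_sub_sq_pos hρ
  have hexponent : -((a ^ 2 + b ^ 2 - 2 * ρ * a * b) / (2 * (1 - ρ ^ 2))) =
      -a ^ 2 / 2 + -((b - ρ * a) / √(1 - ρ ^ 2)) ^ 2 / 2 := by
    rw [div_pow, sq_sqrt hpos.le]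
    field_simp
    ring
  have hconst : (2 * π * √(1 - ρ ^ 2))⁻¹ = (√(2 * π))⁻¹ * (√(2 * π))⁻¹ / √(1 - ρ ^ 2) := by
    rw [mul_inv, ← mul_inv (√(2 * π)), mul_self_sqrt two_pi_pos.le, div_eq_mul_inv]
  rw [stdBivariateGaussianPDF, hexponent, exp_add, hconst, stdGaussianPDF_eq, stdGaussianPDF_eq]
  ring

/-- The conditional CDF at `b` of a standard Gaussian having correlation `r` with another one that
takes the value `x`. -/
def condGaussianCDF (b x r : ℝ) : ℝ := stdGaussianCDF ((b - r * x) / √(1 - r ^ 2))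

lemma hasDerivAt_condGaussianCDF_arg (b x : ℝ) (hr : |r| < 1) :
    HasDerivAt (fun r => (b - r * x) / √(1 - r ^ 2))
      ((r * b - x) / ((1 - r ^ 2) * √(1 - r ^ 2))) r := by
  have hpos := one_sub_sq_pos hr
  have hsqrt : HasDerivAt (fun r : ℝ => √(1 - r ^ 2)) (-(2 * r) / (2 * √(1 - r ^ 2))) r := by
    simpa using ((hasDerivAt_pow 2 r).const_sub 1).sqrt hpos.ne'
  have hnum : HasDerivAt (fun r => b - r * x) (-x) r := by
    simpa using ((hasDerivAt_id r).mul_const x).const_sub b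
  refine (hnum.div hsqrt (sqrt_pos.2 hpos).ne').congr_deriv ?_
  have hsq := sq_sqrt hpos.le
  have hne := (sqrt_pos.2 hpos).ne'
  field_simp
  rw [hsq]
  ring

/- Together with `hasDerivAt_stdBivariateGaussianPDF`, this is Plackett's identity: the
`r`-derivative of the integrand is the `x`-derivative of the bivariate density. -/
lemma hasDerivAt_mul_condGaussianCDF (b x : ℝ) (hr : |r| < 1) :
    HasDerivAt (fun r => φ x * condGaussianCDF b x r)
      (stdBivariateGaussianPDF r x b * ((r * b - x) / (1 - r ^ 2))) r := by
  refine (((hasDerivAt_stdGaussianCDF _).comp r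
    (hasDerivAt_condGaussianCDF_arg b x hr)).const_mul (φ x)).congr_deriv ?_
  rw [stdBivariateGaussianPDF_eq_mul hr, ← div_div]
  ring

lemma hasDerivAt_stdBivariateGaussianPDF (r x b : ℝ) :
    HasDerivAt (fun x => stdBivariateGaussianPDF r x b)
      (stdBivariateGaussianPDF r x b * ((r * b - x) / (1 - r ^ 2))) x := by
  have hexponent : HasDerivAt
      (fun x => -((x ^ 2 + b ^ 2 - 2 * r * x * b) / (2 * (1 - r ^ 2))))
      ((r * b - x) / (1 - r ^ 2)) x := by
    have hsq : HasDerivAt (fun x : ℝ => x ^ 2 + b ^ 2) (2 * x) x := by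
      simpa using (hasDerivAt_pow 2 x).add_const (b ^ 2)
    have hlin : HasDerivAt (fun x : ℝ => 2 * r * x * b) (2 * r * b) x := by
      simpa using ((hasDerivAt_id x).const_mul (2 * r)).mul_const b
    refine ((hsq.sub hlin).div_const _).neg.congr_deriv ?_
    rw [mul_assoc, ← mul_sub, mul_div_mul_left _ _ two_ne_zero, ← neg_div, neg_sub]
  exact (hexponent.exp.const_mul _).congr_deriv (mul_assoc _ _ _).symm

lemma tendsto_stdBivariateGaussianPDF_atBot (hr : |r| < 1) (b : ℝ) :
    Tendsto (fun x => stdBivariateGaussianPDF r x b) atBot (𝓝 0) := by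
  have harg : Tendsto (fun x => (x - r * b) / √(1 - r ^ 2)) atBot atBot :=
    (tendsto_atBot_add_const_right _ (-(r * b)) tendsto_id).atBot_div_const
      (sqrt_pos.2 (one_sub_sq_pos hr))
  simpa only [stdBivariateGaussianPDF_comm r _ b, stdBivariateGaussianPDF_eq_mul hr, mul_zero,
    zero_div, Function.comp_apply] using
    ((tendsto_stdGaussianPDF_atBot.comp harg).const_mul (φ b)).div_const (√(1 - r ^ 2))

lemma abs_deriv_stdBivariateGaussianPDF_le (hc : c < 1) (hr : |r| ≤ c) (b x : ℝ) :
    |stdBivariateGaussianPDF r x b * ((r * b - x) / (1 - r ^ 2))| ≤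
      (φ x * |b| + φ x * |x|) * ((1 - c ^ 2) * √(1 - c ^ 2))⁻¹ := by
  have hr1 : |r| < 1 := hr.trans_lt hc
  have hc1 : |c| < 1 := by rwa [abs_of_nonneg ((abs_nonneg r).trans hr)]
  have hposr := one_sub_sq_pos hr1
  have hposc := one_sub_sq_pos hc1
  have hsq : r ^ 2 ≤ c ^ 2 := sq_le_sq.2 (hr.trans (le_abs_self c))
  have hnum : |r * b - x| ≤ |b| + |x| :=
    (abs_sub _ _).trans (by rw [abs_mul]; gcongr; exact mul_le_of_le_one_left (abs_nonneg b) hr1.le)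
  have hφ := gaussianPDFReal_nonneg 0 1
  rw [stdBivariateGaussianPDF_eq_mul hr1, abs_mul, abs_div, abs_div, abs_mul,
    abs_of_nonneg (hφ _), abs_of_nonneg (hφ _), abs_of_pos hposr,
    abs_of_nonneg (sqrt_nonneg (1 - r ^ 2))]
  calc φ x * φ ((b - r * x) / √(1 - r ^ 2)) / √(1 - r ^ 2) * (|r * b - x| / (1 - r ^ 2))
      = φ x * φ ((b - r * x) / √(1 - r ^ 2)) * |r * b - x| *
          ((1 - r ^ 2) * √(1 - r ^ 2))⁻¹ := by rw [mul_inv]; ring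
    _ ≤ φ x * 1 * (|b| + |x|) * ((1 - c ^ 2) * √(1 - c ^ 2))⁻¹ := by
        gcongr
        · have := hφ x; have := hφ ((b - r * x) / √(1 - r ^ 2)); positivity
        · have := hφ x; positivity
        · exact hφ x
        · exact stdGaussianPDF_le_one _
    _ = (φ x * |b| + φ x * |x|) * ((1 - c ^ 2) * √(1 - c ^ 2))⁻¹ := by ring

lemma measurable_condGaussianCDF (b r : ℝ) : Measurable fun x => condGaussianCDF b x r :=
  (continuous_stdGaussianCDF.comp (by fun_prop)).measurable

lemma integrable_mul_condGaussianCDF (b r : ℝ) :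
    Integrable fun x => φ x * condGaussianCDF b x r := by
  refine (integrable_gaussianPDFReal 0 1).mul_bdd (c := 1)
    (measurable_condGaussianCDF b r).aestronglyMeasurable (Eventually.of_forall fun x => ?_)
  rw [condGaussianCDF, stdGaussianCDF, norm_of_nonneg ENNReal.toReal_nonneg]
  exact measureReal_le_one

lemma hasDerivAt_integral_mul_condGaussianCDF (a b : ℝ) (hρ : |ρ| < 1) :
    HasDerivAt (fun r => ∫ x in Set.Iic a, φ x * condGaussianCDF b x r)
      (stdBivariateGaussianPDF ρ a b) ρ := by
  obtain ⟨c, hρc, hc⟩ := exists_between hρ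
  have hball {r : ℝ} (hr : r ∈ Metric.ball (0 : ℝ) c) : |r| < c := by simpa using hr
  have hdiff := hasDerivAt_integral_of_dominated_loc_of_deriv_le
    (μ := volume.restrict (Set.Iic a)) (F := fun r x => φ x * condGaussianCDF b x r)
    (F' := fun r x => stdBivariateGaussianPDF r x b * ((r * b - x) / (1 - r ^ 2)))
    (bound := fun x => (φ x * |b| + φ x * |x|) * ((1 - c ^ 2) * √(1 - c ^ 2))⁻¹)
    (Metric.isOpen_ball.mem_nhds (show ρ ∈ Metric.ball (0 : ℝ) c by simpa using hρc))
    (Eventually.of_forall fun r =>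
      (integrable_mul_condGaussianCDF b r).integrableOn.aestronglyMeasurable)
    (integrable_mul_condGaussianCDF b ρ).integrableOn
    (by unfold stdBivariateGaussianPDF; fun_prop)
    (Eventually.of_forall fun x r hr =>
      abs_deriv_stdBivariateGaussianPDF_le hc (hball hr).le b x)
    (((integrable_gaussianPDFReal 0 1).mul_const _).add
      integrable_stdGaussianPDF_mul_abs |>.mul_const _).integrableOn
    (Eventually.of_forall fun x r hr => hasDerivAt_mul_condGaussianCDF b x ((hball hr).trans hc))
  have hftc := integral_Iic_of_hasDerivAt_of_tendsto'
    (fun x _ => hasDerivAt_stdBivariateGaussianPDF ρ x b) hdiff.1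
    (tendsto_stdBivariateGaussianPDF_atBot hρ b)
  exact hdiff.2.congr_deriv (by rw [hftc, sub_zero])

/-- The centered Gaussian law on `ℝ²` with unit variances and correlation `ρ ∈ [-1, 1]`, as the law
of `(x, ρ x + √(1 - ρ²) y)` for independent standard Gaussians `x` and `y`. -/
def stdBivariateGaussian (ρ : ℝ) : Measure (ℝ × ℝ) :=
  ((gaussianReal 0 1).prod (gaussianReal 0 1)).map fun z => (z.1, ρ * z.1 + √(1 - ρ ^ 2) * z.2)

instance (ρ : ℝ) : IsProbabilityMeasure (stdBivariateGaussian ρ) :=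
  Measure.isProbabilityMeasure_map (by fun_prop)

lemma map_fst_stdBivariateGaussian (ρ : ℝ) :
    (stdBivariateGaussian ρ).map Prod.fst = gaussianReal 0 1 := by
  rw [stdBivariateGaussian, Measure.map_map (by fun_prop) (by fun_prop)]
  exact measurePreserving_fst.map_eq

lemma map_snd_stdBivariateGaussian (hρ : ρ ^ 2 ≤ 1) :
    (stdBivariateGaussian ρ).map Prod.snd = gaussianReal 0 1 := by
  have hcomp : Prod.snd ∘ (fun z : ℝ × ℝ => (z.1, ρ * z.1 + √(1 - ρ ^ 2) * z.2)) =
      (fun z => z.1 + z.2) ∘ Prod.map (ρ * ·) (√(1 - ρ ^ 2) * ·) := rfl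
  have hvar : NNReal.mk (ρ ^ 2) (sq_nonneg _) * 1 +
      NNReal.mk (√(1 - ρ ^ 2) ^ 2) (sq_nonneg _) * 1 = 1 := by
    ext
    simp [sq_sqrt (sub_nonneg.2 hρ)]
  rw [stdBivariateGaussian, Measure.map_map (by fun_prop) (by fun_prop), hcomp,
    ← Measure.map_map (by fun_prop) (by fun_prop), ← Measure.map_prod_map _ _ (by fun_prop)
    (by fun_prop), gaussianReal_map_const_mul, gaussianReal_map_const_mul]
  exact gaussianReal_conv_gaussianReal.trans (by rw [hvar]; simp)

lemma stdBivariateGaussian_one :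
    stdBivariateGaussian 1 = (gaussianReal 0 1).map fun x => (x, x) := by
  have hfst := (measurePreserving_fst (μ := gaussianReal 0 1) (ν := gaussianReal 0 1)).map_eq
  conv_rhs => rw [← hfst, Measure.map_map (by fun_prop) measurable_fst]
  simp [stdBivariateGaussian, Function.comp_def]

lemma integral_exp_dotProduct_pi_gaussianReal {κ : Type*} [Fintype κ] (w : κ → ℝ) :
    ∫ z, Complex.exp ((w ⬝ᵥ z : ℝ) * Complex.I) ∂Measure.pi (fun _ => gaussianReal 0 1) =
      Complex.exp (-(w ⬝ᵥ w : ℝ) / 2) := by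
  have h := charFun_stdGaussian (WithLp.toLp 2 w : EuclideanSpace ℝ κ)
  rw [← map_pi_eq_stdGaussian, charFun_apply, integral_map (by fun_prop) (by fun_prop)] at h
  simp only [PiLp.inner_apply, RCLike.inner_apply, conj_trivial] at h
  simp only [dotProduct, h, ← sq, ← Complex.ofReal_pow, EuclideanSpace.real_norm_sq_eq]

lemma measurable_mulVec {ι κ : Type*} [Fintype κ] (A : Matrix ι κ ℝ) : Measurable (A *ᵥ ·) :=
  measurable_pi_lambda _ fun _ => Finset.measurable_fun_sum _ fun j _ =>
    (measurable_pi_apply j).const_mul _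

lemma charFunDual_map_mulVec_pi_gaussianReal {ι κ : Type*} [Fintype ι] [DecidableEq ι]
    [Fintype κ] (A : Matrix ι κ ℝ) (L : StrongDual ℝ (ι → ℝ)) :
    charFunDual ((Measure.pi fun _ => gaussianReal 0 1).map (A *ᵥ ·)) L =
      Complex.exp (-((fun i => L (Pi.single i 1)) ⬝ᵥ (A * Aᵀ) *ᵥ fun i => L (Pi.single i 1) : ℝ)
        / 2) := by
  have hL (x : ι → ℝ) : L x = (fun i => L (Pi.single i 1)) ⬝ᵥ x := by
    conv_lhs => rw [pi_eq_sum_univ' x, map_sum]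
    simp only [map_smul, smul_eq_mul, dotProduct, mul_comm]
  rw [charFunDual_apply, integral_map (measurable_mulVec A).aemeasurable (by fun_prop)]
  simp only [hL (A *ᵥ _), dotProduct_mulVec _ A, integral_exp_dotProduct_pi_gaussianReal]
  rw [← mulVec_mulVec, dotProduct_mulVec, mulVec_transpose]

lemma map_mulVec_pi_gaussianReal_congr {ι κ κ' : Type*} [Finite ι] [Fintype κ] [Fintype κ']
    {A : Matrix ι κ ℝ} {B : Matrix ι κ' ℝ} (h : A * Aᵀ = B * Bᵀ) :
    (Measure.pi fun _ => gaussianReal 0 1).map (A *ᵥ ·) =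
      (Measure.pi fun _ => gaussianReal 0 1).map (B *ᵥ ·) := by
  classical
  have := Fintype.ofFinite ι
  have := Measure.isProbabilityMeasure_map (μ := Measure.pi fun _ : κ => gaussianReal 0 1)
    (measurable_mulVec A).aemeasurable
  have := Measure.isProbabilityMeasure_map (μ := Measure.pi fun _ : κ' => gaussianReal 0 1)
    (measurable_mulVec B).aemeasurable
  exact Measure.ext_of_charFunDual (funext fun L => by
    rw [charFunDual_map_mulVec_pi_gaussianReal, charFunDual_map_mulVec_pi_gaussianReal, h])

lemma map_finTwo_pi_gaussianReal (ρ : ℝ) :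
    (Measure.pi fun _ : Fin 2 => gaussianReal 0 1).map
        (fun z => ((!![1, 0; ρ, √(1 - ρ ^ 2)] *ᵥ z) 0, (!![1, 0; ρ, √(1 - ρ ^ 2)] *ᵥ z) 1)) =
      stdBivariateGaussian ρ := by
  rw [stdBivariateGaussian, ← (measurePreserving_finTwoArrow (gaussianReal 0 1)).map_eq,
    Measure.map_map (by fun_prop) (MeasurableEquiv.measurable _)]
  congr 1
  ext z <;> simp [Matrix.mulVec, dotProduct, Fin.sum_univ_two]

lemma map_mulVec_pair_pi_gaussianReal {ι κ : Type*} [Fintype κ] {A : Matrix ι κ ℝ}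
    (hdiag : ∀ i, (A * Aᵀ) i i = 1) {i j : ι} (hij : (A * Aᵀ) i j = ρ) (hρ : ρ ^ 2 ≤ 1) :
    (Measure.pi fun _ => gaussianReal 0 1).map (fun z => ((A *ᵥ z) i, (A *ᵥ z) j)) =
      stdBivariateGaussian ρ := by
  have hsqrt : √(1 - ρ ^ 2) ^ 2 = 1 - ρ ^ 2 := sq_sqrt (sub_nonneg.2 hρ)
  have hji : (A * Aᵀ) j i = ρ := by
    rw [← hij, ← transpose_apply (A * Aᵀ), transpose_mul, transpose_transpose]
  have hcov : A.submatrix ![i, j] id * (A.submatrix ![i, j] id)ᵀ =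
      !![1, 0; ρ, √(1 - ρ ^ 2)] * !![1, 0; ρ, √(1 - ρ ^ 2)]ᵀ := by
    change (A * Aᵀ).submatrix ![i, j] ![i, j] = _
    ext a b
    fin_cases a <;> fin_cases b <;> simp [hdiag, hij, hji, vecMul, dotProduct, hsqrt, ← sq]
  have hpair : Measurable fun x : Fin 2 → ℝ => (x 0, x 1) := by fun_prop
  rw [← map_finTwo_pi_gaussianReal]
  have := congrArg (Measure.map fun x : Fin 2 → ℝ => (x 0, x 1))
    (map_mulVec_pi_gaussianReal_congr hcov)
  rwa [Measure.map_map hpair (measurable_mulVec _), Measure.map_map hpair (measurable_mulVec _)]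
    at this
/-- The CDF at `(a, b)` of the standard bivariate Gaussian law with correlation `ρ`. -/
def stdBivariateGaussianCDF (ρ a b : ℝ) : ℝ :=
  (stdBivariateGaussian ρ).real (Prod.fst ⁻¹' Set.Iic a ∩ Prod.snd ⁻¹' Set.Iic b)

lemma measurableSet_le_and_comb_le (ρ a b : ℝ) :
    MeasurableSet {z : ℝ × ℝ | z.1 ≤ a ∧ ρ * z.1 + √(1 - ρ ^ 2) * z.2 ≤ b} :=
  (show Measurable fun z : ℝ × ℝ => (z.1, ρ * z.1 + √(1 - ρ ^ 2) * z.2) by fun_prop)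
    (measurableSet_Iic.prod measurableSet_Iic)

lemma stdBivariateGaussianCDF_eq_prod (ρ a b : ℝ) :
    stdBivariateGaussianCDF ρ a b = ((gaussianReal 0 1).prod (gaussianReal 0 1)).real
      {z : ℝ × ℝ | z.1 ≤ a ∧ ρ * z.1 + √(1 - ρ ^ 2) * z.2 ≤ b} :=
  map_measureReal_apply (by fun_prop)
    ((measurable_fst measurableSet_Iic).inter (measurable_snd measurableSet_Iic))

lemma stdBivariateGaussianCDF_eq_integral (hρ : |ρ| < 1) (a b : ℝ) :
    stdBivariateGaussianCDF ρ a b = ∫ x in Set.Iic a, φ x * condGaussianCDF b x ρ := by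
  have hmeas := measurableSet_le_and_comb_le ρ a b
  have hslice (x : ℝ) :
      gaussianReal 0 1 (Prod.mk x ⁻¹' {z | z.1 ≤ a ∧ ρ * z.1 + √(1 - ρ ^ 2) * z.2 ≤ b}) =
        (Set.Iic a).indicator
          (fun x => gaussianReal 0 1 (Set.Iic ((b - ρ * x) / √(1 - ρ ^ 2)))) x := by
    by_cases hx : x ≤ a
    · have hset : Prod.mk x ⁻¹' {z | z.1 ≤ a ∧ ρ * z.1 + √(1 - ρ ^ 2) * z.2 ≤ b} =
          Set.Iic ((b - ρ * x) / √(1 - ρ ^ 2)) := by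
        ext y
        simp [hx, le_div_iff₀ (sqrt_pos.2 (one_sub_sq_pos hρ)), le_sub_iff_add_le',
          mul_comm y]
      rw [hset, Set.indicator_of_mem (Set.mem_Iic.2 hx)]
    · simp [hx]
  rw [stdBivariateGaussianCDF_eq_prod, measureReal_def, Measure.prod_apply hmeas,
    ← integral_toReal (measurable_measure_prodMk_left hmeas).aemeasurable
      (Eventually.of_forall fun x => measure_lt_top _ _),
    integral_gaussianReal_eq_integral_smul one_ne_zero, ← integral_indicator measurableSet_Iic]
  refine integral_congr_ae (Eventually.of_forall fun x => ?_)
  simp only [hslice, condGaussianCDF, stdGaussianCDF, smul_eq_mul]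
  by_cases hx : x ∈ Set.Iic a <;> simp only [hx, Set.indicator_of_mem, Set.indicator_of_notMem,
    not_false_eq_true, ENNReal.toReal_zero, mul_zero]

lemma stdBivariateGaussianCDF_zero (a b : ℝ) :
    stdBivariateGaussianCDF 0 a b = stdGaussianCDF a * stdGaussianCDF b := by
  rw [stdBivariateGaussianCDF_eq_integral (by simp), stdGaussianCDF_eq_integral a,
    ← integral_mul_const]
  simp [condGaussianCDF]

lemma hasDerivAt_stdBivariateGaussianCDF (hρ : |ρ| < 1) (a b : ℝ) :
    HasDerivAt (fun r => stdBivariateGaussianCDF r a b) (stdBivariateGaussianPDF ρ a b) ρ := by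
  refine (hasDerivAt_integral_mul_condGaussianCDF a b hρ).congr_of_eventuallyEq ?_
  filter_upwards [continuous_abs.continuousAt.eventually_lt continuousAt_const hρ] with r hr
  exact stdBivariateGaussianCDF_eq_integral hr a b

/- At `ρ = 1` the law degenerates to the diagonal, whose intersection with the boundary of the
quadrant is still a null set. -/
lemma continuousAt_stdBivariateGaussianCDF_one (a b : ℝ) :
    ContinuousAt (fun ρ => stdBivariateGaussianCDF ρ a b) 1 := by
  have hne : ∀ᵐ z ∂((gaussianReal 0 1).prod (gaussianReal 0 1)), z.1 ≠ b := by
    have := nullSingletonClass_gaussianReal (μ := 0) one_ne_zero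
    exact Measure.quasiMeasurePreserving_fst.ae
      (measure_eq_zero_iff_ae_notMem.1 (measure_singleton b))
  have hind : ∀ᵐ z ∂((gaussianReal 0 1).prod (gaussianReal 0 1)), ∀ᶠ ρ in 𝓝 (1 : ℝ),
      (z ∈ {z : ℝ × ℝ | z.1 ≤ a ∧ ρ * z.1 + √(1 - ρ ^ 2) * z.2 ≤ b} ↔
        z ∈ {z : ℝ × ℝ | z.1 ≤ a ∧ 1 * z.1 + √(1 - 1 ^ 2) * z.2 ≤ b}) := by
    filter_upwards [hne] with z hz
    have hlim : Tendsto (fun ρ : ℝ => ρ * z.1 + √(1 - ρ ^ 2) * z.2) (𝓝 1) (𝓝 z.1) := by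
      have hcont : Continuous fun ρ : ℝ => ρ * z.1 + √(1 - ρ ^ 2) * z.2 := by fun_prop
      simpa using hcont.tendsto 1
    rcases lt_or_gt_of_ne hz with h | h
    · filter_upwards [hlim.eventually_lt_const h] with ρ hρ
      simp [hρ.le, h.le]
    · filter_upwards [hlim.eventually_const_lt h] with ρ hρ
      simp [not_le.2 hρ, not_le.2 h]
  simp only [ContinuousAt, stdBivariateGaussianCDF_eq_prod]
  exact (ENNReal.tendsto_toReal (measure_ne_top _ _)).comp
    (tendsto_measure_of_ae_tendsto_indicator_of_isFiniteMeasure _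
      (measurableSet_le_and_comb_le 1 a b) (measurableSet_le_and_comb_le · a b) hind)

lemma stdBivariateGaussianCDF_eq_add_integral (hρ : ρ ∈ Set.Ioc (-1) 1) (a b : ℝ) :
    stdBivariateGaussianCDF ρ a b = stdGaussianCDF a * stdGaussianCDF b +
      ∫ r in (0 : ℝ)..ρ, stdBivariateGaussianPDF r a b := by
  have hcont : ContinuousOn (fun r => stdBivariateGaussianCDF r a b) (Set.uIcc 0 ρ) := by
    intro r hr
    have hr' : r ∈ Set.Ioc (-1 : ℝ) 1 := Set.ordConnected_Ioc.uIcc_subset (by simp) hρ hr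
    rcases hr'.2.eq_or_lt with rfl | hlt
    · exact (continuousAt_stdBivariateGaussianCDF_one a b).continuousWithinAt
    · exact (hasDerivAt_stdBivariateGaussianCDF (abs_lt.2 ⟨hr'.1, hlt⟩) a b).continuousAt
        |>.continuousWithinAt
  have hderiv : ∀ r ∈ Set.Ioo (min 0 ρ) (max 0 ρ),
      HasDerivAt (fun r => stdBivariateGaussianCDF r a b) (stdBivariateGaussianPDF r a b) r :=
    fun r hr => hasDerivAt_stdBivariateGaussianCDF (abs_lt.2
      ⟨(lt_min (by simp) hρ.1).trans hr.1, hr.2.trans_le (max_le zero_le_one hρ.2)⟩) a b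
  rw [intervalIntegral.integral_eq_sub_of_hasDeriv_right hcont
      (fun r hr => (hderiv r hr).hasDerivWithinAt)
      (intervalIntegral.intervalIntegrable_deriv_of_nonneg hcont hderiv
        fun r _ => stdBivariateGaussianPDF_nonneg r a b),
    stdBivariateGaussianCDF_zero, add_sub_cancel]

lemma eventCov_stdBivariateGaussian_Iic (hρ : ρ ∈ Set.Ioc (-1) 1) (a b : ℝ) :
    eventCov (stdBivariateGaussian ρ) (Prod.fst ⁻¹' Set.Iic a) (Prod.snd ⁻¹' Set.Iic b) =
      ∫ r in (0 : ℝ)..ρ, stdBivariateGaussianPDF r a b := by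
  have hρ' : ρ ^ 2 ≤ 1 := sq_le_one_iff_abs_le_one ρ |>.2 (abs_le.2 ⟨hρ.1.le, hρ.2⟩)
  have hfst : (stdBivariateGaussian ρ).real (Prod.fst ⁻¹' Set.Iic a) = stdGaussianCDF a := by
    rw [← map_measureReal_apply measurable_fst measurableSet_Iic, map_fst_stdBivariateGaussian]
    rfl
  have hsnd : (stdBivariateGaussian ρ).real (Prod.snd ⁻¹' Set.Iic b) = stdGaussianCDF b := by
    rw [← map_measureReal_apply measurable_snd measurableSet_Iic,
      map_snd_stdBivariateGaussian hρ']
    rfl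
  rw [eventCov, hfst, hsnd, ← stdBivariateGaussianCDF, stdBivariateGaussianCDF_eq_add_integral hρ,
    add_sub_cancel_left]

end Gaussian

section Arms

variable {q : ℕ → ℝ} {K : ℕ} {ρ : ℝ}

lemma measurableSet_armSet (q : ℕ → ℝ) (K : ℕ) (k : Fin K) : MeasurableSet (armSet q K k) := by
  unfold armSet
  split_ifs
  exacts [measurableSet_Iic, measurableSet_Ioi, measurableSet_Ioc]

lemma monotoneOn_of_stdGaussianCDF_eq
    (hq : ∀ m : ℕ, 0 < m → m < K → stdGaussianCDF (q m) = (m : ℝ) / K) :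
    MonotoneOn q (Set.Ioo 0 K) := by
  rintro m ⟨hm, hmK⟩ n ⟨hn, hnK⟩ hmn
  by_contra! hlt
  have hle : (m : ℝ) / K ≤ n / K := by gcongr
  have hge : (n : ℝ) / K ≤ m / K := by
    rw [← hq n hn hnK, ← hq m hm hmK]
    exact measureReal_mono (Set.Iic_subset_Iic.2 hlt.le)
  have hK : (0 : ℝ) < K := by exact_mod_cast hm.trans hmK
  have hmn' : m = n := by
    exact_mod_cast (div_left_inj' hK.ne').1 (hle.antisymm hge)
  exact hlt.ne (by rw [hmn'])

lemma gaussianReal_real_armSet (hK : 2 ≤ K)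
    (hq : ∀ m : ℕ, 0 < m → m < K → stdGaussianCDF (q m) = (m : ℝ) / K) (k : Fin K) :
    (gaussianReal 0 1).real (armSet q K k) = 1 / K := by
  have hIic (m : ℕ) (hm : 0 < m) (hmK : m < K) :
      (gaussianReal 0 1).real (Set.Iic (q m)) = m / K := hq m hm hmK
  have hk := k.isLt
  have hK0 : (K : ℝ) ≠ 0 := by positivity
  unfold armSet
  split_ifs with hfirst hlast
  · rw [hIic 1 one_pos (by omega), Nat.cast_one]
  · rw [← Set.compl_Iic, probReal_compl_eq_one_sub measurableSet_Iic,
      hIic (K - 1) (by omega) (by omega), Nat.cast_sub (by omega)]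
    field_simp
    ring
  · have hle : q k ≤ q (k + 1) := monotoneOn_of_stdGaussianCDF_eq hq
      ⟨by omega, hk⟩ ⟨by omega, by omega⟩ (Nat.le_succ _)
    rw [← Set.Iic_sdiff_Iic, measureReal_sdiff (Set.Iic_subset_Iic.2 hle) measurableSet_Iic,
      hIic _ (by omega) (by omega), hIic _ (by omega) hk, Nat.cast_add_one]
    ring

lemma eventCov_stdBivariateGaussian_armSet (hq : MonotoneOn q (Set.Ioo 0 K))
    (hρ : ρ ∈ Set.Ioc (-1) 1) (k : Fin K) :
    eventCov (stdBivariateGaussian ρ) (Prod.fst ⁻¹' armSet q K k) (Prod.snd ⁻¹' armSet q K k) =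
      fkfun q K k ρ := by
  have hIic (i j : ℕ) : eventCov (stdBivariateGaussian ρ)
      (Prod.fst ⁻¹' Set.Iic (q i)) (Prod.snd ⁻¹' Set.Iic (q j)) = rfun q i j ρ :=
    eventCov_stdBivariateGaussian_Iic hρ (q i) (q j)
  have hfst (a : ℝ) : MeasurableSet (Prod.fst ⁻¹' Set.Iic a : Set (ℝ × ℝ)) :=
    measurable_fst measurableSet_Iic
  have hsnd (a : ℝ) : MeasurableSet (Prod.snd ⁻¹' Set.Iic a : Set (ℝ × ℝ)) :=
    measurable_snd measurableSet_Iic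
  unfold armSet fkfun
  split_ifs with hfirst hlast
  · exact hIic 1 1
  · rw [← Set.compl_Iic, Set.preimage_compl, Set.preimage_compl, eventCov_compl_compl (hfst _)
      (hsnd _), hIic]
  · have hle : q k ≤ q (k + 1) := hq ⟨by omega, k.isLt⟩ ⟨by omega, by omega⟩ (Nat.le_succ _)
    have hcomm : rfun q (k + 1) k ρ = rfun q k (k + 1) ρ :=
      intervalIntegral.integral_congr fun r _ => stdBivariateGaussianPDF_comm r _ _
    rw [← Set.Iic_sdiff_Iic, Set.preimage_sdiff, Set.preimage_sdiff,
      eventCov_sdiff_sdiff (hfst _) (Set.preimage_mono (Set.Iic_subset_Iic.2 hle)) (hsnd _)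
        (Set.preimage_mono (Set.Iic_subset_Iic.2 hle)), hIic, hIic, hIic, hIic, hcomm]
    ring

lemma stdBivariateGaussianPDF_le_one {r : ℝ} (hr : |r| ≤ 1 / 2) (a b : ℝ) :
    stdBivariateGaussianPDF r a b ≤ 1 := by
  have hr2 : r ^ 2 ≤ 1 / 4 := by nlinarith [sq_abs r, abs_nonneg r]
  have hsqrt : 1 / 2 ≤ √(1 - r ^ 2) := Real.le_sqrt_of_sq_le (by linarith)
  have hquad : 0 ≤ a ^ 2 + b ^ 2 - 2 * r * a * b := by
    nlinarith [sq_nonneg (a - r * b), mul_nonneg (sub_nonneg.2 hr2) (sq_nonneg b), sq_nonneg b]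
  refine mul_le_one₀ (inv_le_one_of_one_le₀ (by nlinarith [pi_gt_three])) (exp_pos _).le ?_
  rw [exp_le_one_iff, neg_nonpos]
  exact div_nonneg hquad (by linarith)

lemma abs_rfun_le (q : ℕ → ℝ) (i j : ℕ) (hρ : |ρ| ≤ 1 / 2) : |rfun q i j ρ| ≤ |ρ| := by
  have hbound : ∀ r ∈ Set.uIoc 0 ρ, ‖stdBivariateGaussianPDF r (q i) (q j)‖ ≤ 1 := by
    intro r hr
    have hr' : |r| ≤ |ρ| := by
      simpa using Set.abs_sub_left_of_mem_uIcc (Set.uIoc_subset_uIcc hr)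
    rw [norm_of_nonneg (stdBivariateGaussianPDF_nonneg r _ _)]
    exact stdBivariateGaussianPDF_le_one (hr'.trans hρ) _ _
  exact (intervalIntegral.norm_integral_le_of_norm_le_const hbound).trans_eq (by simp)

lemma abs_fkfun_le (q : ℕ → ℝ) (k : Fin K) (hρ : |ρ| ≤ 1 / 2) : |fkfun q K k ρ| ≤ 4 * |ρ| := by
  have hr (i j : ℕ) := abs_le.1 (abs_rfun_le q i j hρ)
  have hρ0 := abs_nonneg ρ
  unfold fkfun
  split_ifs
  · exact (abs_rfun_le q 1 1 hρ).trans (by linarith)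
  · exact (abs_rfun_le q (K - 1) (K - 1) hρ).trans (by linarith)
  · rw [abs_le]
    constructor <;> linarith [hr k k, hr (k + 1) (k + 1), hr k (k + 1)]

lemma fkfun_one (hK : 2 ≤ K)
    (hq : ∀ m : ℕ, 0 < m → m < K → stdGaussianCDF (q m) = (m : ℝ) / K) (k : Fin K) :
    fkfun q K k 1 = 1 / K - 1 / (K : ℝ) ^ 2 := by
  have hk := measurableSet_armSet q K k
  rw [← eventCov_stdBivariateGaussian_armSet (monotoneOn_of_stdGaussianCDF_eq hq) (by norm_num),
    stdBivariateGaussian_one, eventCov_map (by fun_prop) (measurable_fst hk) (measurable_snd hk)]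
  simp only [eventCov, Set.preimage_preimage, Set.preimage_id', Set.inter_self,
    gaussianReal_real_armSet hK hq, one_div_mul_one_div, sq]

lemma one_div_two_mul_sq_le_fkfun_add (hK : 2 ≤ K)
    (hq : ∀ m : ℕ, 0 < m → m < K → stdGaussianCDF (q m) = (m : ℝ) / K) (k : Fin K)
    (hρ : ρ = 1 ∨ |ρ| ≤ 1 / (8 * (K : ℝ) ^ 2)) :
    1 / (2 * (K : ℝ) ^ 2) ≤ fkfun q K k ρ + 1 / (K : ℝ) ^ 2 := by
  have hK' : (2 : ℝ) ≤ K := by exact_mod_cast hK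
  obtain rfl | hρ := hρ
  · rw [fkfun_one hK hq, sub_add_cancel]
    gcongr
    nlinarith
  · have hhalf : 1 / (8 * (K : ℝ) ^ 2) ≤ 1 / 2 := by
      gcongr
      nlinarith
    calc 1 / (2 * (K : ℝ) ^ 2) = -(4 * (1 / (8 * (K : ℝ) ^ 2))) + 1 / (K : ℝ) ^ 2 := by ring
      _ ≤ -(4 * |ρ|) + 1 / (K : ℝ) ^ 2 := by gcongr
      _ ≤ fkfun q K k ρ + 1 / (K : ℝ) ^ 2 := by
        gcongr
        exact (abs_le.1 (abs_fkfun_le q k (hρ.trans hhalf))).1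

variable {Ω ι : Type*}

/-- The event that unit `i` is assigned arm `k` when the Gaussian vector `T` is Gaussianized
coordinatewise. -/
def armEvent (q : ℕ → ℝ) (K : ℕ) (k : Fin K) (T : Ω → ι → ℝ) (i : ι) : Set Ω :=
  {ω | T ω i ∈ armSet q K k}

variable [MeasurableSpace Ω] {μ : Measure Ω} {T : Ω → ι → ℝ}

lemma measurableSet_armEvent (k : Fin K) (hT : Measurable T) (i : ι) :
    MeasurableSet (armEvent q K k T i) :=
  (measurable_pi_apply i).comp hT (measurableSet_armSet q K k)

variable [Fintype ι] {R : Matrix ι ι ℝ}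

/-- The vector `T` has law `N(0, R)` under `μ` for a correlation matrix `R`, i.e. it is distributed
as `A z` with `A Aᵀ = R` and `z` a standard Gaussian vector. -/
structure IsCorrelatedGaussian (μ : Measure Ω) (T : Ω → ι → ℝ) (R : Matrix ι ι ℝ) : Prop where
  measurable : Measurable T
  apply_self : ∀ i, R i i = 1
  exists_map_eq : ∃ A : Matrix ι ι ℝ, A * Aᵀ = R ∧
    μ.map T = (Measure.pi fun _ => gaussianReal 0 1).map fun z => A *ᵥ z

namespace IsCorrelatedGaussian

lemma map_pair (h : IsCorrelatedGaussian μ T R) {i j : ι} (hR : R i j ^ 2 ≤ 1) :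
    μ.map (fun ω => (T ω i, T ω j)) = stdBivariateGaussian (R i j) := by
  obtain ⟨A, rfl, hA⟩ := h.exists_map_eq
  have hpair : Measurable fun t : ι → ℝ => (t i, t j) := by fun_prop
  rw [← map_mulVec_pair_pi_gaussianReal h.apply_self rfl hR]
  have := congrArg (Measure.map fun t => (t i, t j)) hA
  rwa [Measure.map_map hpair h.measurable, Measure.map_map hpair (measurable_mulVec A)] at this

lemma measurable_pair (h : IsCorrelatedGaussian μ T R) (i j : ι) :
    Measurable fun ω => (T ω i, T ω j) := by
  have := h.measurable
  fun_prop

lemma eventCov_armEvent (h : IsCorrelatedGaussian μ T R) (hq : MonotoneOn q (Set.Ioo 0 K))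
    {i j : ι} (hR : R i j ∈ Set.Ioc (-1) 1) (k : Fin K) :
    eventCov μ (armEvent q K k T i) (armEvent q K k T j) = fkfun q K k (R i j) := by
  have hR' : R i j ^ 2 ≤ 1 := (sq_le_one_iff_abs_le_one _).2 (abs_le.2 ⟨hR.1.le, hR.2⟩)
  have hk := measurableSet_armSet q K k
  rw [← eventCov_stdBivariateGaussian_armSet hq hR, ← h.map_pair hR',
    eventCov_map (h.measurable_pair i j) (measurable_fst hk) (measurable_snd hk)]
  rfl

lemma measureReal_armEvent (h : IsCorrelatedGaussian μ T R) (hK : 2 ≤ K)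
    (hq : ∀ m : ℕ, 0 < m → m < K → stdGaussianCDF (q m) = (m : ℝ) / K) (k : Fin K) (i : ι) :
    μ.real (armEvent q K k T i) = 1 / K := by
  have hk := measurableSet_armSet q K k
  have hpair := h.map_pair (i := i) (j := i) (by simp [h.apply_self])
  rw [← gaussianReal_real_armSet hK hq k, ← map_fst_stdBivariateGaussian, ← hpair,
    Measure.map_map measurable_fst (h.measurable_pair i i),
    map_measureReal_apply (measurable_fst.comp (h.measurable_pair i i)) hk]
  rfl

lemma measureReal_armEvent_inter [IsFiniteMeasure μ] (h : IsCorrelatedGaussian μ T R) (hK : 2 ≤ K)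
    (hq : ∀ m : ℕ, 0 < m → m < K → stdGaussianCDF (q m) = (m : ℝ) / K) {i j : ι}
    (hR : R i j ∈ Set.Ioc (-1) 1) (k : Fin K) :
    μ.real (armEvent q K k T i ∩ armEvent q K k T j) =
      fkfun q K k (R i j) + 1 / (K : ℝ) ^ 2 := by
  rw [measureReal_inter_eq_eventCov_add,
    h.eventCov_armEvent (monotoneOn_of_stdGaussianCDF_eq hq) hR,
    h.measureReal_armEvent hK hq, h.measureReal_armEvent hK hq, one_div_mul_one_div, sq]

end IsCorrelatedGaussian

end Arms

section HorvitzThompson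

variable {Ω ι : Type*} [MeasurableSpace Ω] {μ : Measure Ω} {E : ι → Set Ω} {y : ι → ℝ}
  {C M ε δ : ℝ}

/-- The contribution of the ordered pair `(i, j)` to the Horvitz–Thompson variance estimator: the
covariance of the selection indicators of `i` and `j`, reweighted by the probability of selecting
both (and `0` when that probability vanishes). -/
def htWeight (μ : Measure Ω) (E : ι → Set Ω) (y : ι → ℝ) (i j : ι) : ℝ :=
  y i * y j * eventCov μ (E i) (E j) / μ.real (E i ∩ E j)

lemma abs_htWeight_le (hy : ∀ i, |y i| ≤ M) (hδ : 0 < δ) {i j : ι}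
    (hcov : |eventCov μ (E i) (E j)| ≤ ε) (hpair : δ ≤ μ.real (E i ∩ E j)) :
    |htWeight μ E y i j| ≤ M ^ 2 * ε / δ := by
  have hM : 0 ≤ M := (abs_nonneg _).trans (hy i)
  rw [htWeight, abs_div, abs_mul, abs_mul, abs_of_nonneg measureReal_nonneg, sq]
  have hε : 0 ≤ ε := (abs_nonneg _).trans hcov
  gcongr
  exacts [hy i, hy j]

lemma abs_htWeight_self_le [IsProbabilityMeasure μ] (hy : ∀ i, |y i| ≤ M) (i : ι) :
    |htWeight μ E y i i| ≤ M ^ 2 := by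
  have hratio : |eventCov μ (E i) (E i) / μ.real (E i)| ≤ 1 := by
    have h0 : 0 ≤ μ.real (E i) := measureReal_nonneg
    have h1 : μ.real (E i) ≤ 1 := measureReal_le_one
    rw [eventCov, Set.inter_self, abs_div, abs_of_nonneg h0,
      abs_of_nonneg (sub_nonneg.2 (mul_le_of_le_one_left h0 h1))]
    exact div_le_one_of_le₀ (sub_le_self _ (mul_nonneg h0 h0)) h0
  rw [htWeight, Set.inter_self, mul_div_assoc, abs_mul, abs_mul, ← sq]
  calc |y i| ^ 2 * |eventCov μ (E i) (E i) / μ.real (E i)| ≤ M ^ 2 * 1 := by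
        gcongr
        exact hy i
    _ = M ^ 2 := mul_one _

variable [Fintype ι]

/-- The Horvitz–Thompson estimator of `∑ i, ∑ j, y i * y j * eventCov μ (E i) (E j)`, the variance
of `∑ i, y i * (E i).indicator 1`, from the outcomes `y i` of the units `i` whose selection event
`E i` occurs. -/
def htVarianceEstimator (μ : Measure Ω) (E : ι → Set Ω) (y : ι → ℝ) (ω : Ω) : ℝ :=
  ∑ i, ∑ j, htWeight μ E y i j * (E i ∩ E j).indicator 1 ω

lemma measurable_htVarianceEstimator (hE : ∀ i, MeasurableSet (E i)) (y : ι → ℝ) :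
    Measurable (htVarianceEstimator μ E y) :=
  Finset.measurable_fun_sum _ fun i _ => Finset.measurable_fun_sum _ fun j _ =>
    (measurable_const.indicator ((hE i).inter (hE j))).const_mul _

lemma htVarianceEstimator_eq_sum_outcomes {α : Type*} [DecidableEq α] {Y : ι → α → ℝ}
    {D : ι → α} {a : α} {ω : Ω} (hD : ∀ i, D i = a ↔ ω ∈ E i) :
    htVarianceEstimator μ E (Y · a) ω =
      ∑ i, ∑ j, Y i (D i) * Y j (D j) * eventCov μ (E i) (E j) *
        (if D i = a ∧ D j = a then 1 else 0) / μ.real (E i ∩ E j) := by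
  refine Finset.sum_congr rfl fun i _ => Finset.sum_congr rfl fun j _ => ?_
  by_cases h : D i = a ∧ D j = a
  · have hω : ω ∈ E i ∩ E j := ⟨(hD i).1 h.1, (hD j).1 h.2⟩
    simp [htWeight, h, hω]
  · have hω : ω ∉ E i ∩ E j := fun hmem => h ⟨(hD i).2 hmem.1, (hD j).2 hmem.2⟩
    simp [h, hω]

lemma abs_htVarianceEstimator_sub_diag_le (hC : 0 ≤ C)
    (hw : Pairwise fun i j => |htWeight μ E y i j| ≤ C) (ω : Ω) :
    |htVarianceEstimator μ E y ω - ∑ i, htWeight μ E y i i * (E i).indicator 1 ω| ≤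
      Fintype.card ι ^ 2 * C := by
  classical
  have hterm {i j : ι} (hij : i ≠ j) :
      ‖htWeight μ E y i j * (E i ∩ E j).indicator (1 : Ω → ℝ) ω‖ ≤ C := by
    rw [norm_mul, ← mul_one C]
    gcongr
    exacts [hw hij, by simpa using norm_indicator_le_norm_self (1 : Ω → ℝ) ω]
  have hrow (i : ι) : ‖∑ j, htWeight μ E y i j * (E i ∩ E j).indicator (1 : Ω → ℝ) ω -
      htWeight μ E y i i * (E i).indicator 1 ω‖ ≤ Fintype.card ι * C := by
    rw [← Finset.add_sum_erase _ _ (Finset.mem_univ i), Set.inter_self, add_sub_cancel_left]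
    calc _ ≤ ∑ _j ∈ Finset.univ.erase i, C :=
          norm_sum_le_of_le _ fun j hj => hterm (Finset.ne_of_mem_erase hj).symm
      _ ≤ ∑ _j : ι, C := Finset.sum_le_univ_sum_of_nonneg fun _ => hC
      _ = Fintype.card ι * C := by simp
  rw [htVarianceEstimator, ← Finset.sum_sub_distrib]
  calc _ ≤ ∑ _i : ι, Fintype.card ι * C := norm_sum_le_of_le _ fun i _ => hrow i
    _ = Fintype.card ι ^ 2 * C := by simp [sq, mul_assoc]

variable [IsProbabilityMeasure μ]

lemma integral_htVarianceEstimator (hE : ∀ i, MeasurableSet (E i))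
    (hpos : ∀ i j, μ.real (E i ∩ E j) ≠ 0) (y : ι → ℝ) :
    ∫ ω, htVarianceEstimator μ E y ω ∂μ = ∑ i, ∑ j, y i * y j * eventCov μ (E i) (E j) := by
  have hint (i j : ι) :
      Integrable (fun ω => htWeight μ E y i j * (E i ∩ E j).indicator (1 : Ω → ℝ) ω) μ :=
    ((integrable_const 1).indicator ((hE i).inter (hE j))).const_mul _
  simp only [htVarianceEstimator]
  rw [integral_finsetSum _ fun i _ => integrable_finsetSum _ fun j _ => hint i j]
  refine Finset.sum_congr rfl fun i _ => ?_
  rw [integral_finsetSum _ fun j _ => hint i j]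
  refine Finset.sum_congr rfl fun j _ => ?_
  rw [integral_const_mul, integral_indicator_one ((hE i).inter (hE j)), htWeight,
    div_mul_cancel₀ _ (hpos i j)]

lemma variance_fun_add_le {X Y : Ω → ℝ} (hX : MemLp X 2 μ) (hY : MemLp Y 2 μ) :
    Var[fun ω => X ω + Y ω; μ] ≤ 2 * Var[X; μ] + 2 * Var[Y; μ] := by
  have hsub : 0 ≤ Var[fun ω => X ω - Y ω; μ] := variance_nonneg _ _
  rw [variance_fun_sub hX hY] at hsub
  rw [variance_fun_add hX hY]
  linarith

lemma variance_sum_mul_indicator_le {w : ι → ℝ} (hE : ∀ i, MeasurableSet (E i))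
    (hw : ∀ i, |w i| ≤ C) (hε : 0 ≤ ε)
    (hcov : Pairwise fun i j => |eventCov μ (E i) (E j)| ≤ ε) :
    Var[fun ω => ∑ i, w i * (E i).indicator 1 ω; μ] ≤
      C ^ 2 * (Fintype.card ι + Fintype.card ι ^ 2 * ε) := by
  classical
  have hL2 (i : ι) : MemLp (fun ω => w i * (E i).indicator (1 : Ω → ℝ) ω) 2 μ :=
    (memLp_indicator_one (hE i) 2).const_mul _
  have hterm (i j : ι) : w i * (w j * eventCov μ (E i) (E j)) ≤
      C ^ 2 * ((if i = j then 1 else 0) + ε) := by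
    have hij : |eventCov μ (E i) (E j)| ≤ (if i = j then 1 else 0) + ε := by
      split_ifs with h
      · exact (abs_eventCov_le_one _ _).trans (by linarith)
      · exact (hcov h).trans (by linarith)
    have hC : 0 ≤ C := (abs_nonneg _).trans (hw i)
    calc w i * (w j * eventCov μ (E i) (E j))
        ≤ |w i| * (|w j| * |eventCov μ (E i) (E j)|) := by
          rw [← abs_mul, ← abs_mul]
          exact le_abs_self _
      _ ≤ C * (C * ((if i = j then 1 else 0) + ε)) := by
          gcongr
          exacts [hw i, hw j]
      _ = C ^ 2 * ((if i = j then 1 else 0) + ε) := by ring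
  calc Var[fun ω => ∑ i, w i * (E i).indicator 1 ω; μ]
      = ∑ i, ∑ j, w i * (w j * eventCov μ (E i) (E j)) := by
        rw [variance_fun_sum hL2]
        simp only [covariance_const_mul_left, covariance_const_mul_right,
          covariance_indicator_one, hE, mul_left_comm]
    _ ≤ ∑ i, ∑ j, C ^ 2 * ((if i = j then 1 else 0) + ε) :=
        Finset.sum_le_sum fun i _ => Finset.sum_le_sum fun j _ => hterm i j
    _ = C ^ 2 * (Fintype.card ι + Fintype.card ι ^ 2 * ε) := by
        simp only [← Finset.mul_sum, Finset.sum_add_distrib, Finset.sum_ite_eq, Finset.mem_univ,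
          if_true, Finset.sum_const, Finset.card_univ, nsmul_eq_mul]
        ring

lemma variance_htVarianceEstimator_le (hE : ∀ i, MeasurableSet (E i))
    (hy : ∀ i, |y i| ≤ M) (hε : 0 ≤ ε) (hδ : 0 < δ)
    (hcov : Pairwise fun i j => |eventCov μ (E i) (E j)| ≤ ε)
    (hpair : Pairwise fun i j => δ ≤ μ.real (E i ∩ E j)) :
    Var[htVarianceEstimator μ E y; μ] ≤
      2 * ((M ^ 2) ^ 2 * (Fintype.card ι + Fintype.card ι ^ 2 * ε)) +
        2 * (Fintype.card ι ^ 2 * (M ^ 2 * ε / δ)) ^ 2 := by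
  set diag : Ω → ℝ := fun ω => ∑ i, htWeight μ E y i i * (E i).indicator 1 ω
  set off : Ω → ℝ := fun ω => htVarianceEstimator μ E y ω - diag ω
  set C : ℝ := Fintype.card ι ^ 2 * (M ^ 2 * ε / δ)
  have hdiag_meas : Measurable diag :=
    Finset.measurable_fun_sum _ fun i _ => (measurable_const.indicator (hE i)).const_mul _
  have hoff_meas : Measurable off := (measurable_htVarianceEstimator hE y).sub hdiag_meas
  have hoff_le (ω : Ω) : |off ω| ≤ C :=
    abs_htVarianceEstimator_sub_diag_le (by positivity)
      (fun i j hij => abs_htWeight_le hy hδ (hcov hij) (hpair hij)) ω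
  have hdiag_L2 : MemLp diag 2 μ := memLp_finsetSum _ fun i _ =>
    (memLp_indicator_one (hE i) 2).const_mul _
  have hoff_L2 : MemLp off 2 μ :=
    .of_bound hoff_meas.aestronglyMeasurable C (Eventually.of_forall hoff_le)
  have hoff_var : Var[off; μ] ≤ C ^ 2 := by
    refine (variance_le_sq_of_bounded (Eventually.of_forall fun ω => abs_le.1 (hoff_le ω))
      hoff_meas.aemeasurable).trans_eq ?_
    ring
  have hsplit : htVarianceEstimator μ E y = fun ω => diag ω + off ω :=
    funext fun ω => (add_sub_cancel _ _).symm
  rw [hsplit]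
  refine (variance_fun_add_le hdiag_L2 hoff_L2).trans ?_
  gcongr
  exact variance_sum_mul_indicator_le hE (abs_htWeight_self_le hy) hε hcov

lemma tendsto_variance_htVarianceEstimator {Ω : ℕ → Type*} [∀ n, MeasurableSpace (Ω n)]
    {μ : ∀ n, Measure (Ω n)} [∀ n, IsProbabilityMeasure (μ n)] {E : ∀ n, Fin n → Set (Ω n)}
    {y : ∀ n, Fin n → ℝ} {ε : ℕ → ℝ} (hE : ∀ n i, MeasurableSet (E n i))
    (hy : ∀ n i, |y n i| ≤ M) (hε0 : ∀ n, 0 ≤ ε n)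
    (hε : Tendsto (fun n : ℕ => n * ε n) atTop (𝓝 0)) (hδ : 0 < δ)
    (hcov : ∀ᶠ n in atTop, Pairwise fun i j => |eventCov (μ n) (E n i) (E n j)| ≤ ε n)
    (hpair : ∀ᶠ n in atTop, Pairwise fun i j => δ ≤ (μ n).real (E n i ∩ E n j)) (C : ℝ) :
    Tendsto (fun n : ℕ => Var[fun ω => C / n * htVarianceEstimator (μ n) (E n) (y n) ω; μ n])
      atTop (𝓝 0) := by
  have hbound : Tendsto (fun n : ℕ => 2 * C ^ 2 * M ^ 4 * (1 / n + n * ε n * (1 / n)) +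
      2 * (C * M ^ 2 / δ * (n * ε n)) ^ 2) atTop (𝓝 0) := by
    have hinv := tendsto_one_div_atTop_nhds_zero_nat (𝕜 := ℝ)
    simpa using ((hinv.add (hε.mul hinv)).const_mul (2 * C ^ 2 * M ^ 4)).add
      (((hε.const_mul (C * M ^ 2 / δ)).pow 2).const_mul 2)
  refine squeeze_zero' (Eventually.of_forall fun n => variance_nonneg _ _) ?_ hbound
  filter_upwards [hcov, hpair, eventually_gt_atTop 0] with n hcov hpair hn
  have hvar := variance_htVarianceEstimator_le (hE n) (hy n) (hε0 n) hδ hcov hpair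
  rw [Fintype.card_fin] at hvar
  rw [variance_const_mul]
  refine (mul_le_mul_of_nonneg_left hvar (sq_nonneg _)).trans_eq ?_
  field_simp

end HorvitzThompson

section ProjectedGradient

lemma opNorm_nonneg {n : ℕ} (B : Matrix (Fin n) (Fin n) ℝ) : 0 ≤ opNorm B := norm_nonneg _

lemma abs_apply_le_opNorm {n : ℕ} (B : Matrix (Fin n) (Fin n) ℝ) (i j : Fin n) :
    |B i j| ≤ opNorm B := by
  set e : EuclideanSpace ℝ (Fin n) := EuclideanSpace.single j 1 with he
  have hentry : (toEuclideanCLM (𝕜 := ℝ) B e) i = B i j := by simp [he, ofLp_toEuclideanCLM]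
  have hnorm : ‖e‖ = 1 := by simp [he]
  calc |B i j| = ‖(toEuclideanCLM (𝕜 := ℝ) B e) i‖ := by rw [hentry, norm_eq_abs]
    _ ≤ ‖toEuclideanCLM (𝕜 := ℝ) B e‖ := PiLp.norm_apply_le _ i
    _ ≤ opNorm B := (toEuclideanCLM (𝕜 := ℝ) B).le_opNorm_of_le hnorm.le |>.trans_eq (mul_one _)

lemma opNorm_mul_le {n : ℕ} (B C : Matrix (Fin n) (Fin n) ℝ) :
    opNorm (B * C) ≤ opNorm B * opNorm C := by
  rw [opNorm, map_mul]
  exact norm_mul_le _ _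

/-- The gradient step `U = I − e (XXᵀ − I)` that the PGD-Gauss solution normalizes, with
`e = η f_k′(0)`. -/
def pgdStep {n d : ℕ} (X : Matrix (Fin n) (Fin d) ℝ) (e : ℝ) : Matrix (Fin n) (Fin n) ℝ :=
  1 - e • (X * Xᵀ - 1)

variable {n d : ℕ} {X : Matrix (Fin n) (Fin d) ℝ}

lemma pgd_apply (X : Matrix (Fin n) (Fin d) ℝ) (η c : ℝ) (i j : Fin n) :
    pgd X η c i j = (pgdStep X (η * c) * pgdStep X (η * c)) i j /
      (√(∑ l, pgdStep X (η * c) i l ^ 2) * √(∑ l, pgdStep X (η * c) j l ^ 2)) :=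
  rfl

lemma pgdStep_transpose (X : Matrix (Fin n) (Fin d) ℝ) (e : ℝ) : (pgdStep X e)ᵀ = pgdStep X e := by
  simp [pgdStep]

lemma abs_pgdStep_mul_self_apply_le (X : Matrix (Fin n) (Fin d) ℝ) (e : ℝ) {i j : Fin n}
    (hij : i ≠ j) : |(pgdStep X e * pgdStep X e) i j| ≤
      2 * (|e| * opNorm (X * Xᵀ - 1)) + (|e| * opNorm (X * Xᵀ - 1)) ^ 2 := by
  set B := X * Xᵀ - 1 with hB
  have hexpand : pgdStep X e * pgdStep X e = 1 - (2 * e) • B + (e ^ 2) • (B * B) := by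
    simp only [pgdStep, sub_mul, mul_sub, one_mul, mul_one, Matrix.smul_mul, Matrix.mul_smul,
      smul_smul, two_mul, add_smul, sq, ← hB]
    abel
  have hentry : (pgdStep X e * pgdStep X e) i j = -(2 * (e * B i j)) + e ^ 2 * (B * B) i j := by
    simp [hexpand, one_apply_ne hij, mul_assoc]
  calc |(pgdStep X e * pgdStep X e) i j|
      ≤ 2 * (|e| * |B i j|) + |e| ^ 2 * |(B * B) i j| := by
        rw [hentry]
        refine (abs_add_le _ _).trans_eq ?_
        simp only [abs_neg, abs_mul, abs_two, abs_pow]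
    _ ≤ 2 * (|e| * opNorm B) + |e| ^ 2 * (opNorm B * opNorm B) := by
        gcongr
        exacts [abs_apply_le_opNorm B i j,
          (abs_apply_le_opNorm (B * B) i j).trans (opNorm_mul_le B B)]
    _ = 2 * (|e| * opNorm B) + (|e| * opNorm B) ^ 2 := by ring

lemma one_le_sum_sq_pgdStep (hX : ∀ i, ∑ j, X i j ^ 2 = 1) (e : ℝ) (i : Fin n) :
    1 ≤ ∑ l, pgdStep X e i l ^ 2 := by
  have hgram : (X * Xᵀ) i i = 1 := by simp [mul_apply, ← sq, hX]
  calc (1 : ℝ) = pgdStep X e i i ^ 2 := by simp [pgdStep, hgram]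
    _ ≤ ∑ l, pgdStep X e i l ^ 2 :=
      Finset.single_le_sum (f := fun l => pgdStep X e i l ^ 2) (fun l _ => sq_nonneg _)
        (Finset.mem_univ i)

lemma pgd_apply_self (hX : ∀ i, ∑ j, X i j ^ 2 = 1) (η c : ℝ) (i : Fin n) :
    pgd X η c i i = 1 := by
  have hpos := zero_lt_one.trans_le (one_le_sum_sq_pgdStep hX (η * c) i)
  have hrow : (pgdStep X (η * c) * pgdStep X (η * c)) i i = ∑ l, pgdStep X (η * c) i l ^ 2 := by
    nth_rw 2 [← pgdStep_transpose]
    simp [mul_apply, sq]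
  rw [pgd_apply, mul_self_sqrt hpos.le, hrow, div_self hpos.ne']

/-- A bound for the off-diagonal entries of the PGD-Gauss solution, linear in the size
`|η c| ‖XXᵀ − I‖` of the gradient step to leading order. -/
def pgdOffDiagBound (X : Matrix (Fin n) (Fin d) ℝ) (η c : ℝ) : ℝ :=
  2 * (|η * c| * opNorm (X * Xᵀ - 1)) + (|η * c| * opNorm (X * Xᵀ - 1)) ^ 2

lemma pgdOffDiagBound_nonneg (X : Matrix (Fin n) (Fin d) ℝ) (η c : ℝ) :
    0 ≤ pgdOffDiagBound X η c := by
  have := opNorm_nonneg (X * Xᵀ - 1)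
  unfold pgdOffDiagBound
  positivity

lemma abs_pgd_apply_le (hX : ∀ i, ∑ j, X i j ^ 2 = 1) (η c : ℝ) :
    Pairwise fun i j => |pgd X η c i j| ≤ pgdOffDiagBound X η c := by
  intro i j hij
  have hnorm (i : Fin n) : 1 ≤ √(∑ l, pgdStep X (η * c) i l ^ 2) :=
    one_le_sqrt.2 (one_le_sum_sq_pgdStep hX _ i)
  rw [pgd_apply, abs_div, abs_of_nonneg (a := √_ * √_) (by positivity)]
  exact (div_le_self (abs_nonneg _) (one_le_mul_of_one_le_of_one_le (hnorm i) (hnorm j))).trans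
    (abs_pgdStep_mul_self_apply_le X _ hij)

lemma tendsto_natCast_mul_two_mul_add_sq {x : ℕ → ℝ} (hx : Tendsto x atTop (𝓝 0))
    (hnx : Tendsto (fun n : ℕ => (n : ℝ) ^ 2 * x n ^ 2) atTop (𝓝 0)) :
    Tendsto (fun n : ℕ => n * (2 * x n + x n ^ 2)) atTop (𝓝 0) := by
  have hnx' : Tendsto (fun n : ℕ => n * x n) atTop (𝓝 0) := by
    have habs (n : ℕ) : √((n : ℝ) ^ 2 * x n ^ 2) = |n * x n| := by
      rw [← mul_pow, sqrt_sq_eq_abs]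
    exact (tendsto_zero_iff_abs_tendsto_zero _).2
      (by simpa [Function.comp_def, habs, abs_mul] using hnx.sqrt)
  have hsum := (hnx'.const_mul 2).add (hnx'.mul hx)
  rw [mul_zero, mul_zero, add_zero] at hsum
  exact hsum.congr fun n => by ring

lemma tendsto_natCast_mul_pgdOffDiagBound {d : ℕ → ℕ} {X : ∀ n, Matrix (Fin n) (Fin (d n)) ℝ}
    {η : ℕ → ℝ} (hη : ∀ n, 0 ≤ η n)
    (hop : Tendsto (fun n => η n * opNorm (X n * (X n)ᵀ - 1)) atTop (𝓝 0))
    (hop2 : Tendsto (fun n : ℕ =>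
      (n : ℝ) ^ 2 * η n ^ 2 * opNorm (X n * (X n)ᵀ - 1) ^ 2) atTop (𝓝 0)) (c : ℝ) :
    Tendsto (fun n => n * pgdOffDiagBound (X n) (η n) c) atTop (𝓝 0) := by
  have habs (n : ℕ) : |η n * c| = |c| * η n := by rw [abs_mul, abs_of_nonneg (hη n), mul_comm]
  simp only [pgdOffDiagBound, habs, mul_assoc]
  refine tendsto_natCast_mul_two_mul_add_sq ?_ ?_
  · simpa only [mul_zero] using hop.const_mul |c|
  · have hscaled := hop2.const_mul (|c| ^ 2)
    rw [mul_zero] at hscaled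
    exact hscaled.congr fun n => by ring

end ProjectedGradient

lemma tendsto_zero_of_natCast_mul {ε : ℕ → ℝ} (hε : Tendsto (fun n : ℕ => n * ε n) atTop (𝓝 0)) :
    Tendsto ε atTop (𝓝 0) := by
  have hprod := hε.mul (tendsto_one_div_atTop_nhds_zero_nat (𝕜 := ℝ))
  rw [mul_zero] at hprod
  refine hprod.congr' ?_
  filter_upwards [eventually_ne_atTop 0] with n hn
  field_simp

lemma eq_one_or_abs_apply_le {ι : Type*} {S : Matrix ι ι ℝ} {ε δ : ℝ} (hdiag : ∀ i, S i i = 1)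
    (hoff : Pairwise fun i j => |S i j| ≤ ε) (hεδ : ε ≤ δ) (i j : ι) :
    S i j = 1 ∨ |S i j| ≤ δ := by
  obtain rfl | hij := eq_or_ne i j
  exacts [.inl (hdiag i), .inr ((hoff hij).trans hεδ)]

lemma mem_Ioc_of_eq_one_or_abs_le_half {ρ : ℝ} (hρ : ρ = 1 ∨ |ρ| ≤ 1 / 2) :
    ρ ∈ Set.Ioc (-1) 1 := by
  obtain rfl | hρ := hρ
  · norm_num
  · constructor <;> linarith [abs_le.1 hρ]

lemma dotProduct_mulVec_eq_sum {ι : Type*} [Fintype ι] (S : Matrix ι ι ℝ) (v w : ι → ℝ) :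
    v ⬝ᵥ S *ᵥ w = ∑ i, ∑ j, v i * w j * S i j := by
  simp only [dotProduct, mulVec, Finset.mul_sum]
  exact Finset.sum_congr rfl fun i _ => Finset.sum_congr rfl fun j _ => by ring

lemma eventually_forall_mem_Ioc {S : ∀ n, Matrix (Fin n) (Fin n) ℝ} {ε : ℕ → ℝ}
    (hdiag : ∀ n i, S n i i = 1) (hoff : ∀ n, Pairwise fun i j => |S n i j| ≤ ε n)
    (hε : Tendsto ε atTop (𝓝 0)) : ∀ᶠ n in atTop, ∀ i j, S n i j ∈ Set.Ioc (-1) 1 := by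
  filter_upwards [hε.eventually_le_const one_half_pos] with n hn i j
  exact mem_Ioc_of_eq_one_or_abs_le_half (eq_one_or_abs_apply_le (hdiag n) (hoff n) hn i j)

lemma eventually_one_div_le_fkfun_add {K : ℕ} (hK : 2 ≤ K) {q : ℕ → ℝ}
    (hq : ∀ m : ℕ, 0 < m → m < K → stdGaussianCDF (q m) = (m : ℝ) / K)
    {S : ∀ n, Matrix (Fin n) (Fin n) ℝ} {ε : ℕ → ℝ} (hdiag : ∀ n i, S n i i = 1)
    (hoff : ∀ n, Pairwise fun i j => |S n i j| ≤ ε n) (hε : Tendsto ε atTop (𝓝 0)) (k : Fin K) :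
    ∀ᶠ n in atTop, ∀ i j,
      1 / (2 * (K : ℝ) ^ 2) ≤ fkfun q K k (S n i j) + 1 / (K : ℝ) ^ 2 := by
  have hthr : 0 < 1 / (8 * (K : ℝ) ^ 2) := by positivity
  filter_upwards [hε.eventually_le_const hthr] with n hn i j
  exact one_div_two_mul_sq_le_fkfun_add hK hq k
    (eq_one_or_abs_apply_le (hdiag n) (hoff n) hn i j)

lemma tendsto_variance_htVarianceEstimator_armEvent {K : ℕ} (hK : 2 ≤ K) (k : Fin K) {q : ℕ → ℝ}
    (hq : ∀ m : ℕ, 0 < m → m < K → stdGaussianCDF (q m) = (m : ℝ) / K)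
    {Ω : ℕ → Type*} [∀ n, MeasurableSpace (Ω n)] {μ : ∀ n, Measure (Ω n)}
    [∀ n, IsProbabilityMeasure (μ n)] {y : ∀ n, Fin n → ℝ} {M : ℝ} (hy : ∀ n i, |y n i| ≤ M)
    {S : ∀ n, Matrix (Fin n) (Fin n) ℝ} {ε : ℕ → ℝ}
    (hoff : ∀ n, Pairwise fun i j => |S n i j| ≤ ε n)
    (hε0 : ∀ n, 0 ≤ ε n) (hε : Tendsto (fun n : ℕ => n * ε n) atTop (𝓝 0))
    {T : ∀ n, Ω n → Fin n → ℝ} (hT : ∀ n, IsCorrelatedGaussian (μ n) (T n) (S n)) (C : ℝ) :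
    Tendsto (fun n : ℕ => Var[fun ω =>
      C / n * htVarianceEstimator (μ n) (armEvent q K k (T n)) (y n) ω; μ n]) atTop (𝓝 0) := by
  have hεlim := tendsto_zero_of_natCast_mul hε
  have hmem := eventually_forall_mem_Ioc (fun n => (hT n).apply_self) hoff hεlim
  refine tendsto_variance_htVarianceEstimator (ε := fun n => 4 * ε n)
    (δ := 1 / (2 * (K : ℝ) ^ 2)) (fun n => measurableSet_armEvent k (hT n).measurable) hy
    (fun n => mul_nonneg zero_le_four (hε0 n)) (by simpa [mul_left_comm] using hε.const_mul 4)
    (by positivity) ?_ ?_ C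
  · filter_upwards [hmem, hεlim.eventually_le_const one_half_pos] with n hn hhalf i j hij
    rw [(hT n).eventCov_armEvent (monotoneOn_of_stdGaussianCDF_eq hq) (hn i j)]
    calc |fkfun q K k (S n i j)| ≤ 4 * |S n i j| := abs_fkfun_le q k ((hoff n hij).trans hhalf)
      _ ≤ 4 * ε n := by
        gcongr
        exact hoff n hij
  · filter_upwards [hmem, eventually_one_div_le_fkfun_add hK hq (fun n => (hT n).apply_self) hoff
      hεlim k] with n hn hlower i j _
    rw [(hT n).measureReal_armEvent_inter hK hq (hn i j)]
    exact hlower i j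

theorem variance_estimator_consistency_general {K : ℕ} (hK : 2 ≤ K) (k : Fin K) {q : ℕ → ℝ}
    (hq : ∀ m : ℕ, 0 < m → m < K → stdGaussianCDF (q m) = (m : ℝ) / K)
    {Ω : ℕ → Type*} [∀ n, MeasurableSpace (Ω n)] {μ : ∀ n, Measure (Ω n)}
    [∀ n, IsProbabilityMeasure (μ n)] {Y : ∀ n, Fin n → Fin K → ℝ} {M : ℝ}
    (hM : ∀ n i, |Y n i k| ≤ M) {S : ∀ n, Matrix (Fin n) (Fin n) ℝ} {ε : ℕ → ℝ}
    (hoff : ∀ n, Pairwise fun i j => |S n i j| ≤ ε n)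
    (hε0 : ∀ n, 0 ≤ ε n) (hε : Tendsto (fun n : ℕ => n * ε n) atTop (𝓝 0))
    {T : ∀ n, Ω n → Fin n → ℝ} (hT : ∀ n, IsCorrelatedGaussian (μ n) (T n) (S n))
    {D : ∀ n, Ω n → Fin n → Fin K} (hD : ∀ n ω i, D n ω i = k ↔ T n ω i ∈ armSet q K k)
    {V : ∀ n, Ω n → ℝ}
    (hV : ∀ n ω, V n ω = (K : ℝ) ^ 2 / n * ∑ i, ∑ j,
      Y n i (D n ω i) * Y n j (D n ω j) * fkfun q K k (S n i j) *
        (if D n ω i = k ∧ D n ω j = k then 1 else 0) / (fkfun q K k (S n i j) + 1 / (K : ℝ) ^ 2)) :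
    (∀ᶠ n in atTop, ∀ i j, 0 < fkfun q K k (S n i j) + 1 / (K : ℝ) ^ 2) ∧
    (∀ᶠ n in atTop, ∫ ω, V n ω ∂μ n = (K : ℝ) ^ 2 / n *
      ((Y n · k) ⬝ᵥ (Matrix.of fun i j => fkfun q K k (S n i j)) *ᵥ (Y n · k))) ∧
    Tendsto (fun n => ∫ ω, (V n ω - ∫ ω', V n ω' ∂μ n) ^ 2 ∂μ n) atTop (𝓝 0) := by
  set E : ∀ n, Fin n → Set (Ω n) := fun n => armEvent q K k (T n)
  have hE (n : ℕ) : ∀ i, MeasurableSet (E n i) := measurableSet_armEvent k (hT n).measurable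
  have hεlim := tendsto_zero_of_natCast_mul hε
  have hmem := eventually_forall_mem_Ioc (fun n => (hT n).apply_self) hoff hεlim
  have hcov : ∀ᶠ n in atTop, ∀ i j, eventCov (μ n) (E n i) (E n j) = fkfun q K k (S n i j) :=
    hmem.mono fun n hn i j =>
      (hT n).eventCov_armEvent (monotoneOn_of_stdGaussianCDF_eq hq) (hn i j) k
  have hpair : ∀ᶠ n in atTop, ∀ i j,
      (μ n).real (E n i ∩ E n j) = fkfun q K k (S n i j) + 1 / (K : ℝ) ^ 2 :=
    hmem.mono fun n hn i j => (hT n).measureReal_armEvent_inter hK hq (hn i j) k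
  have hpos : ∀ᶠ n in atTop, ∀ i j, 0 < fkfun q K k (S n i j) + 1 / (K : ℝ) ^ 2 :=
    (eventually_one_div_le_fkfun_add hK hq (fun n => (hT n).apply_self) hoff hεlim k).mono
      fun n hn i j => lt_of_lt_of_le (by positivity) (hn i j)
  have hVE : ∀ᶠ n in atTop, V n = fun ω =>
      (K : ℝ) ^ 2 / n * htVarianceEstimator (μ n) (E n) (Y n · k) ω := by
    filter_upwards [hcov, hpair] with n hc hp
    funext ω
    rw [hV, htVarianceEstimator_eq_sum_outcomes (hD n ω)]
    simp only [hc, hp]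
  refine ⟨hpos, ?_, ?_⟩
  · filter_upwards [hpos, hcov, hpair, hVE] with n hpos hc hp hVE
    rw [hVE, integral_const_mul,
      integral_htVarianceEstimator (hE n) fun i j => hp i j ▸ (hpos i j).ne']
    simp only [hc, dotProduct_mulVec_eq_sum, Matrix.of_apply]
  · refine (tendsto_variance_htVarianceEstimator_armEvent hK k hq hM hoff hε0 hε hT
      (K ^ 2)).congr' (hVE.mono fun n hVE => ?_)
    rw [← hVE, variance_eq_integral]
    exact hVE ▸ ((measurable_htVarianceEstimator (hE n) _).const_mul _).aemeasurable

/-- **Consistency of the Horvitz–Thompson variance estimator.**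
Under unit-norm covariate rows, uniformly bounded arm-`k` potential outcomes,
`η_n ‖XXᵀ − I‖_op → 0` and `n² η_n² ‖XXᵀ − I‖_op² → 0`, the variance estimator
`V̂_η = (K²/n) Σ_{i,j} Y_i(D_i) Y_j(D_j) f_k(Σ_{η,ij}) 1{D_i = k, D_j = k}/P(D_i=k, D_j=k)`,
with `P(D_i=k, D_j=k) = f_k(Σ_{η,ij}) + 1/K²`, is well-defined for large `n` (all denominators
strictly positive), unbiased: `E[V̂_η] = V(Σ_η) = (K²/n) Y(k)ᵀ f_k(Σ_η) Y(k)`, and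
`Var(V̂_η) → 0`. -/
theorem variance_estimator_consistency
    (K : ℕ) (hK : 2 ≤ K) (k : Fin K)
    (q : ℕ → ℝ) (hq : ∀ m : ℕ, 0 < m → m < K → stdGaussianCDF (q m) = (m : ℝ) / K)
    (Ω : ℕ → Type) [∀ nn, MeasureSpace (Ω nn)]
    [∀ nn, IsProbabilityMeasure (volume : Measure (Ω nn))]
    (d : ℕ → ℕ) (X : ∀ nn : ℕ, Matrix (Fin nn) (Fin (d nn)) ℝ)
    (hX : ∀ nn (i : Fin nn), ∑ j, X nn i j ^ 2 = 1)
    (Yf : ∀ nn : ℕ, Fin nn → Fin K → ℝ)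
    (M : ℝ) (hM : ∀ nn (i : Fin nn), |Yf nn i k| ≤ M)
    (η : ℕ → ℝ) (hη : ∀ nn, 0 < η nn)
    (hηop : Tendsto (fun nn => η nn * opNorm (X nn * (X nn)ᵀ - 1)) atTop (𝓝 0))
    (hηop2 : Tendsto (fun nn : ℕ =>
      (nn : ℝ) ^ 2 * η nn ^ 2 * opNorm (X nn * (X nn)ᵀ - 1) ^ 2) atTop (𝓝 0))
    (A : ∀ nn : ℕ, Matrix (Fin nn) (Fin nn) ℝ)
    (hA : ∀ nn, A nn * (A nn)ᵀ = pgd (X nn) (η nn) (deriv (fkfun q K k) 0))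
    (T : ∀ nn : ℕ, Ω nn → Fin nn → ℝ) (hTmeas : ∀ nn, Measurable (T nn))
    (hTlaw : ∀ nn, Measure.map (T nn) volume =
      Measure.map (fun z => A nn *ᵥ z) (Measure.pi fun _ : Fin nn => gaussianReal 0 1))
    (D : ∀ nn : ℕ, Ω nn → Fin nn → Fin K)
    (hD : ∀ nn ω i (kk : Fin K), D nn ω i = kk ↔ T nn ω i ∈ armSet q K kk)
    (Vhat : ∀ nn : ℕ, Ω nn → ℝ)
    (hVhat : ∀ nn ω, Vhat nn ω = (K : ℝ) ^ 2 / nn * ∑ i, ∑ j,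
      Yf nn i (D nn ω i) * Yf nn j (D nn ω j) *
        fkfun q K k (pgd (X nn) (η nn) (deriv (fkfun q K k) 0) i j) *
        (if D nn ω i = k ∧ D nn ω j = k then (1 : ℝ) else 0) /
        (fkfun q K k (pgd (X nn) (η nn) (deriv (fkfun q K k) 0) i j) + 1 / (K : ℝ) ^ 2)) :
    (∀ᶠ nn in atTop, ∀ i j : Fin nn,
      0 < fkfun q K k (pgd (X nn) (η nn) (deriv (fkfun q K k) 0) i j) + 1 / (K : ℝ) ^ 2) ∧
    (∀ᶠ nn in atTop,
      (∫ ω, Vhat nn ω) = (K : ℝ) ^ 2 / nn *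
        ((fun i => Yf nn i k) ⬝ᵥ
          ((Matrix.of fun i j =>
            fkfun q K k (pgd (X nn) (η nn) (deriv (fkfun q K k) 0) i j)) *ᵥ
            fun i => Yf nn i k))) ∧
    Tendsto (fun nn => ∫ ω, (Vhat nn ω - ∫ ω', Vhat nn ω') ^ 2) atTop (𝓝 0) := by
  have hT (nn : ℕ) :
      IsCorrelatedGaussian volume (T nn) (pgd (X nn) (η nn) (deriv (fkfun q K k) 0)) :=
    ⟨hTmeas nn, pgd_apply_self (hX nn) _ _, A nn, hA nn, hTlaw nn⟩
  exact variance_estimator_consistency_general hK k hq hM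
    (fun nn => abs_pgd_apply_le (hX nn) _ _) (fun nn => pgdOffDiagBound_nonneg _ _ _)
    (tendsto_natCast_mul_pgdOffDiagBound (fun nn => (hη nn).le) hηop hηop2 _) hT
    (fun nn ω i => hD nn ω i k) hVhat

end
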